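/- Let p be a prime with p ≡ 3 (mod 8). Then the sum of the quadratic residues of p lying in [1, (p−1)/2] is strictly greater than the sum of the non-residues of p lying in [1, (p−1)/2], i.e. ΣR_b > ΣN_b. -/

import Mathlib

/-!
Let `χ` be the quadratic character modulo `p`. Letting `τ` approach a rational number in the
functional equation of the Jacobi theta function gives the Landsberg–Schaar reciprocity law, hence
the value `√p * I` of the Gauss sum of `χ`, including its sign. Fourier analysis on `ZMod p` and the
sine series `∑ sin (2πna) / n = π (1/2 - a)` then yield `√p * L(1, χ) = π * ∑ j, χ j * (1/2 - j/p)`,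
and the left-hand side is positive by the Euler product and Dirichlet's theorem `L(1, χ) ≠ 0`.

Evaluating the sum on the right by pairing `j` with `p - j`, either directly or after writing every
class as `±2k` with `1 ≤ k ≤ (p - 1) / 2`, eliminates `∑ χ k` and expresses it through
`∑ k * χ k` over the half-interval. As `χ 2 = -1` for `p ≡ 3 (mod 8)`, the latter sum is positive.
-/

open Complex Filter Topology Finset HurwitzZeta
open scoped Real ComplexOrder ZMod

lemma ofReal_mul_cpow {x : ℝ} (hx : 0 < x) {z : ℂ} (hz : z ≠ 0) (s : ℂ) :
    ((x : ℂ) * z) ^ s = (x : ℂ) ^ s * z ^ s := by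
  have hx' : (x : ℂ) ≠ 0 := ofReal_ne_zero.mpr hx.ne'
  rw [cpow_def_of_ne_zero (mul_ne_zero hx' hz), cpow_def_of_ne_zero hx', cpow_def_of_ne_zero hz,
    log_ofReal_mul hx hz, ofReal_log hx.le, add_mul, Complex.exp_add]

lemma im_neg_one_div (z : ℂ) : (-1 / z).im = z.im / normSq z := by
  simp [div_eq_mul_inv]

lemma tendsto_jacobiTheta₂_comap_im_atTop (z : ℂ) :
    Tendsto (jacobiTheta₂ z) (comap im atTop) (𝓝 1) := by
  have him : Tendsto im (comap im atTop) atTop := tendsto_comap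
  have hlim (n : ℤ) : Tendsto (jacobiTheta₂_term n z) (comap im atTop)
      (𝓝 (if n = 0 then 1 else 0)) := by
    split_ifs with hn
    · have hconst : jacobiTheta₂_term n z = fun _ ↦ 1 := by ext; simp [jacobiTheta₂_term, hn]
      exact hconst ▸ tendsto_const_nhds
    · have hn' : 0 < (n : ℝ) ^ 2 := by positivity
      rw [tendsto_zero_iff_norm_tendsto_zero]
      simp only [norm_jacobiTheta₂_term]
      refine Real.tendsto_exp_atBot.comp (tendsto_atBot_add_const_right _ _ ?_)
      exact him.const_mul_atTop_of_neg (by nlinarith [Real.pi_pos])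
  have hbound : ∀ᶠ τ in comap im atTop, ∀ n : ℤ,
      ‖jacobiTheta₂_term n z τ‖ ≤ ‖jacobiTheta₂_term n z I‖ := by
    filter_upwards [him.eventually_ge_atTop 1] with τ hτ n
    simp only [norm_jacobiTheta₂_term, I_im]
    refine Real.exp_le_exp.mpr (sub_le_sub_right ?_ _)
    nlinarith only [mul_nonneg Real.pi_pos.le (sq_nonneg (n : ℝ)), hτ]
  have hsum : Summable fun n : ℤ ↦ ‖jacobiTheta₂_term n z I‖ :=
    ((summable_jacobiTheta₂_term_iff z I).mpr (by simp)).norm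
  exact tsum_ite_eq (0 : ℤ) (fun _ ↦ (1 : ℂ)) ▸
    tendsto_tsum_of_dominated_convergence hsum hlim hbound

lemma jacobiTheta₂_term_mul_add (N r q : ℤ) (τ : ℂ) :
    jacobiTheta₂_term (q * N + r) 0 τ =
      cexp (π * I * r ^ 2 * τ) * jacobiTheta₂_term q (r * N * τ) (N ^ 2 * τ) := by
  simp only [jacobiTheta₂_term, ← Complex.exp_add]
  push_cast
  ring_nf

lemma tsum_jacobiTheta₂_term_mul_add {N : ℕ} (hN : N ≠ 0) (r : ℤ) {τ : ℂ} (hτ : 0 < τ.im) :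
    ∑' q : ℤ, jacobiTheta₂_term (q * N + r) 0 τ =
      (N * (-I * τ) ^ (1 / 2 : ℂ))⁻¹ * jacobiTheta₂ (r / N) (-1 / (N ^ 2 * τ)) := by
  have hτ0 : τ ≠ 0 := by rintro rfl; simp at hτ
  have hsqrt : (-I * (N ^ 2 * τ)) ^ (1 / 2 : ℂ) = N * (-I * τ) ^ (1 / 2 : ℂ) := by
    have hN0 : (0 : ℝ) < N := by exact_mod_cast hN.bot_lt
    have hNτ : (N : ℝ) * (-I * τ) ≠ 0 := by simp [hN, hτ0]
    rw [show -I * (N ^ 2 * τ) = (N : ℝ) * ((N : ℝ) * (-I * τ)) by push_cast; ring,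
      ofReal_mul_cpow hN0 hNτ, ofReal_mul_cpow hN0 (right_ne_zero_of_mul hNτ), ← mul_assoc,
      ← cpow_add _ _ (left_ne_zero_of_mul hNτ), add_halves, cpow_one, ofReal_natCast]
  have hN' : (N : ℂ) ≠ 0 := by exact_mod_cast hN
  calc ∑' q : ℤ, jacobiTheta₂_term (q * N + r) 0 τ
      = cexp (π * I * r ^ 2 * τ) * jacobiTheta₂ (r * N * τ) (N ^ 2 * τ) := by
        simpa [jacobiTheta₂, tsum_mul_left] using
          tsum_congr fun q ↦ jacobiTheta₂_term_mul_add N r q τ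
    _ = _ := by
        rw [jacobiTheta₂_functional_equation, hsqrt, ← mul_assoc, mul_left_comm, ← Complex.exp_add,
          show (r * N * τ / (N ^ 2 * τ) : ℂ) = r / N by field_simp,
          show (π * I * r ^ 2 * τ + -π * I * (r * N * τ) ^ 2 / (N ^ 2 * τ) : ℂ) = 0 by
            field_simp; ring, Complex.exp_zero, mul_one, one_div]

lemma tsum_int_mul_of_periodic {𝕜 : Type*} [NormedDivisionRing 𝕜] [CompleteSpace 𝕜] {N : ℕ}
    (hN : N ≠ 0) {f g : ℤ → 𝕜} (hf : f.Periodic N) (hg : Summable fun n ↦ f n * g n) :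
    ∑' n, f n * g n = ∑ r ∈ range N, f r * ∑' q : ℤ, g (q * N + r) := by
  have : NeZero N := ⟨hN⟩
  have hfr (q : ℤ) (r : Fin N) : f (q * N + (r : ℕ)) = f (r : ℕ) := by
    rw [add_comm, ← smul_eq_mul, hf.zsmul]
  rw [← (Int.divModEquiv N).symm.tsum_eq, ← (Equiv.prodComm _ _).tsum_eq, Summable.tsum_prod,
    tsum_fintype, Finset.sum_range]
  · simp [hfr, tsum_mul_left]
  · exact hg.comp_injective ((Int.divModEquiv N).symm.injective.comp (Equiv.prodComm _ _).injective)

lemma summable_mul_of_periodic {R : Type*} [NormedRing R] [CompleteSpace R] {N : ℕ}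
    (hN : N ≠ 0) {f g : ℤ → R} (hf : f.Periodic N) (hg : Summable fun n ↦ ‖g n‖) :
    Summable fun n ↦ f n * g n := by
  have hmem (n : ℤ) : ‖f n‖ ≤ ∑ r ∈ range N, ‖f r‖ := by
    have hn : f (n % N) = f n := by
      conv_rhs => rw [← Int.emod_add_mul_ediv n N, mul_comm, ← smul_eq_mul, hf.zsmul]
    obtain ⟨r, hr⟩ := Int.eq_ofNat_of_zero_le
      (Int.emod_nonneg n (Nat.cast_ne_zero.mpr hN : (N : ℤ) ≠ 0))
    have hrN : r < N := by have := Int.emod_lt_of_pos n (by omega : (0 : ℤ) < N); omega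
    rw [← hn, hr]
    exact single_le_sum (f := fun r : ℕ ↦ ‖f r‖) (fun _ _ ↦ norm_nonneg _) (mem_range.mpr hrN)
  exact (hg.mul_left _).of_norm_bounded fun n ↦
    (norm_mul_le _ _).trans (mul_le_mul_of_nonneg_right (hmem n) (norm_nonneg _))

/-- The filter of horoball neighbourhoods of the cusp `0` in the upper half-plane. -/
noncomputable def atCuspZero : Filter ℂ := comap (fun τ ↦ (-1 / τ).im) atTop

lemma tendsto_sqrt_mul_tsum_periodic_mul_jacobiTheta₂_term {N : ℕ} (hN : N ≠ 0) {f : ℤ → ℂ}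
    (hf : f.Periodic N) :
    Tendsto (fun τ : ℂ ↦ (-I * τ) ^ (1 / 2 : ℂ) * ∑' n, f n * jacobiTheta₂_term n 0 τ)
      atCuspZero (𝓝 ((∑ r ∈ range N, f r) / N)) := by
  have him : Tendsto (fun τ : ℂ ↦ (-1 / τ).im) atCuspZero atTop := tendsto_comap
  have htheta (z : ℂ) :
      Tendsto (fun τ : ℂ ↦ jacobiTheta₂ z (-1 / (N ^ 2 * τ))) atCuspZero (𝓝 1) := by
    refine (tendsto_jacobiTheta₂_comap_im_atTop z).comp (tendsto_comap_iff.mpr ?_)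
    refine (him.const_mul_atTop (r := ((N : ℝ) ^ 2)⁻¹) (by positivity)).congr fun τ ↦ ?_
    rw [Function.comp_apply, ← im_ofReal_mul]
    push_cast
    congr 1
    field_simp
  have hsum : Tendsto
      (fun τ : ℂ ↦ (∑ r ∈ range N, f r * jacobiTheta₂ (r / N) (-1 / (N ^ 2 * τ))) / N)
      atCuspZero (𝓝 ((∑ r ∈ range N, f r) / N)) := by
    simpa using (tendsto_finsetSum (range N) fun r _ ↦ (htheta (r / N)).const_mul (f r)).div_const
      (N : ℂ)
  refine hsum.congr' ?_
  filter_upwards [him.eventually_gt_atTop 0] with τ hτ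
  have hτ' : 0 < τ.im := by
    rw [im_neg_one_div] at hτ
    exact lt_of_not_ge fun h ↦ hτ.not_ge (div_nonpos_of_nonpos_of_nonneg h (normSq_nonneg τ))
  have hsqrt : (-I * τ) ^ (1 / 2 : ℂ) ≠ 0 := by
    have : τ ≠ 0 := by rintro rfl; simp at hτ
    simp [cpow_eq_zero_iff, this]
  rw [tsum_int_mul_of_periodic hN hf (summable_mul_of_periodic hN hf
    ((summable_jacobiTheta₂_term_iff 0 τ).mpr hτ').norm), mul_sum, sum_div]
  refine sum_congr rfl fun r _ ↦ ?_
  rw [tsum_jacobiTheta₂_term_mul_add hN r hτ']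
  generalize (-I * τ) ^ (1 / 2 : ℂ) = c at hsqrt ⊢
  push_cast
  field_simp

lemma jacobiTheta₂_zero_add (ρ τ : ℂ) :
    jacobiTheta₂ 0 (ρ + τ) = ∑' n : ℤ, cexp (π * I * n ^ 2 * ρ) * jacobiTheta₂_term n 0 τ := by
  refine tsum_congr fun n ↦ ?_
  rw [jacobiTheta₂_term, jacobiTheta₂_term, ← Complex.exp_add]
  ring_nf

lemma tendsto_sqrt_mul_jacobiTheta₂_zero_add {N : ℕ} (hN : N ≠ 0) {ρ : ℂ}
    (hρ : Function.Periodic (fun n : ℤ ↦ cexp (π * I * n ^ 2 * ρ)) N) :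
    Tendsto (fun τ : ℂ ↦ (-I * τ) ^ (1 / 2 : ℂ) * jacobiTheta₂ 0 (ρ + τ))
      atCuspZero (𝓝 ((∑ r ∈ range N, cexp (π * I * r ^ 2 * ρ)) / N)) := by
  simpa [jacobiTheta₂_zero_add] using
    tendsto_sqrt_mul_tsum_periodic_mul_jacobiTheta₂_term hN hρ

lemma sqrt_mul_jacobiTheta₂_zero_add {ρ t : ℝ} (hρ : 0 < ρ) (ht : 0 < t) {τ τ' : ℂ}
    (hτ : τ = t * I) (hτ' : τ' = τ * (ρ * (ρ + τ))⁻¹) :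
    (-I * τ') ^ (1 / 2 : ℂ) * jacobiTheta₂ 0 (-1 / ρ + τ') =
      (-I * (ρ + τ)) ^ (1 / 2 : ℂ) * ((ρ * (ρ + τ))⁻¹) ^ (1 / 2 : ℂ) *
        ((-I * τ) ^ (1 / 2 : ℂ) * jacobiTheta₂ 0 (ρ + τ)) := by
  have hρ' : (ρ : ℂ) ≠ 0 := ofReal_ne_zero.mpr hρ.ne'
  have hρτ : ρ + τ ≠ 0 := fun h ↦ ht.ne' (by simpa [hτ] using congrArg im h)
  have hτt : -I * τ = t := by rw [hτ, mul_left_comm, neg_mul, I_mul_I, neg_neg, mul_one]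
  have hsqrt : (-I * τ') ^ (1 / 2 : ℂ) =
      (-I * τ) ^ (1 / 2 : ℂ) * ((ρ * (ρ + τ))⁻¹) ^ (1 / 2 : ℂ) := by
    rw [hτ', ← mul_assoc, hτt, ofReal_mul_cpow ht (by simp [hρ', hρτ])]
  have harg : -1 / (ρ + τ) = -1 / ρ + τ' := by rw [hτ']; field_simp; ring
  have hne : (-I * (ρ + τ)) ^ (1 / 2 : ℂ) ≠ 0 := by simp [cpow_eq_zero_iff, hρτ]
  rw [hsqrt, jacobiTheta₂_functional_equation 0 (ρ + τ), zero_div, harg]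
  generalize (-I * (ρ + τ)) ^ (1 / 2 : ℂ) = c at hne ⊢
  simp only [mul_zero, ne_eq, OfNat.ofNat_ne_zero, not_false_eq_true, zero_pow, zero_div,
    Complex.exp_zero, mul_one]
  field_simp

lemma tendsto_mul_inv_atCuspZero {ρ : ℝ} (hρ : ρ ≠ 0) :
    Tendsto (fun τ : ℂ ↦ τ * (ρ * (ρ + τ))⁻¹) atCuspZero atCuspZero := by
  have him : Tendsto (fun τ : ℂ ↦ (-1 / τ).im) atCuspZero atTop := tendsto_comap
  refine tendsto_comap_iff.mpr ((him.const_mul_atTop (sq_pos_of_ne_zero hρ)).congr' ?_)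
  filter_upwards [him.eventually_gt_atTop 0] with τ hτ
  have hτ0 : τ ≠ 0 := by rintro rfl; simp at hτ
  have : -1 / (τ * (ρ * (ρ + τ))⁻¹) = (ρ ^ 2 : ℝ) * (-1 / τ) - ρ := by
    push_cast
    field_simp
    ring
  rw [Function.comp_apply, this, sub_im, im_ofReal_mul, ofReal_im, sub_zero]

lemma sqrt_mul_mean_exp_eq {M N : ℕ} (hM : M ≠ 0) (hN : N ≠ 0) {ρ : ℝ} (hρ : 0 < ρ)
    (hper : Function.Periodic (fun n : ℤ ↦ cexp (π * I * n ^ 2 * ρ)) N)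
    (hper' : Function.Periodic (fun n : ℤ ↦ cexp (π * I * n ^ 2 * (-1 / ρ))) M) :
    (-I * ρ) ^ (1 / 2 : ℂ) * ((∑ r ∈ range N, cexp (π * I * r ^ 2 * ρ)) / N) =
      ρ * ((∑ r ∈ range M, cexp (π * I * r ^ 2 * (-1 / ρ))) / M) := by
  let τ : ℝ → ℂ := fun t ↦ (t⁻¹ : ℝ) * I
  have hρ' : (ρ : ℂ) ≠ 0 := ofReal_ne_zero.mpr hρ.ne'
  have hτ : Tendsto τ atTop atCuspZero := by
    refine tendsto_comap_iff.mpr (tendsto_id.congr fun t ↦ ?_)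
    simp [τ, im_neg_one_div]
  have hτ0 : Tendsto τ atTop (𝓝 0) := by
    simpa [τ] using ((continuous_ofReal.tendsto 0).comp tendsto_inv_atTop_zero).mul_const I
  have hρτ : Tendsto (fun t ↦ ρ + τ t) atTop (𝓝 ρ) := by simpa using hτ0.const_add (ρ : ℂ)
  have hfactor : Tendsto (fun t ↦ (-I * (ρ + τ t)) ^ (1 / 2 : ℂ) *
      ((ρ * (ρ + τ t))⁻¹) ^ (1 / 2 : ℂ)) atTop
      (𝓝 ((-I * ρ) ^ (1 / 2 : ℂ) * ((ρ * ρ : ℂ)⁻¹) ^ (1 / 2 : ℂ))) := by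
    refine ((hρτ.const_mul (-I)).cpow tendsto_const_nhds ?_).mul
      (((hρτ.const_mul (ρ : ℂ)).inv₀ (by simp [hρ'])).cpow tendsto_const_nhds ?_)
    · simp [mem_slitPlane_iff, hρ.ne']
    · exact_mod_cast (ofReal_mem_slitPlane (x := (ρ * ρ)⁻¹)).mpr (by positivity)
  have hlim := hfactor.mul ((tendsto_sqrt_mul_jacobiTheta₂_zero_add hN hper).comp hτ)
  have hlim' := (tendsto_sqrt_mul_jacobiTheta₂_zero_add hM hper').comp
    ((tendsto_mul_inv_atCuspZero hρ.ne').comp hτ)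
  have heq := tendsto_nhds_unique hlim (hlim'.congr' ?_)
  · rw [show ((ρ * ρ : ℂ)⁻¹) ^ (1 / 2 : ℂ) = (ρ : ℂ)⁻¹ by
      rw [← sq, ← inv_pow, one_div, sq_cpow_two_inv (by rw [← ofReal_inv, ofReal_re]; positivity)]]
      at heq
    rw [← heq]
    field_simp
  · filter_upwards [eventually_gt_atTop 0] with t ht
    exact sqrt_mul_jacobiTheta₂_zero_add hρ (inv_pos.mpr ht) rfl rfl

lemma neg_I_mul_cpow_half {x : ℝ} (hx : 0 < x) :
    (-I * x) ^ (1 / 2 : ℂ) = (√x : ℝ) * (cexp (π / 4 * I))⁻¹ := by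
  rw [mul_comm, ofReal_mul_cpow hx (by simp), cpow_def_of_ne_zero (neg_ne_zero.mpr I_ne_zero),
    log_neg_I, Real.sqrt_eq_rpow, ofReal_cpow hx.le, ← Complex.exp_neg]
  push_cast
  ring_nf

theorem landsberg_schaar {a b : ℕ} (ha : a ≠ 0) (hb : b ≠ 0) (hab : Even (a * b)) :
    (∑ n ∈ range b, cexp (π * I * n ^ 2 * (a / b))) / √b =
      cexp (π / 4 * I) * ((∑ n ∈ range a, cexp (-π * I * n ^ 2 * (b / a))) / √a) := by
  have periodic {a b : ℕ} (hb : b ≠ 0) (hab : Even (a * b)) (ε : ℤ) :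
      Function.Periodic (fun n : ℤ ↦ cexp (π * I * n ^ 2 * (ε * (a / b)))) b := fun n ↦ by
    obtain ⟨k, hk⟩ := hab
    have hk' : (a * b : ℂ) = k + k := by exact_mod_cast hk
    refine Complex.exp_eq_exp_iff_exists_int.mpr ⟨ε * (n * a + k), ?_⟩
    push_cast
    field_simp
    linear_combination (ε * b : ℂ) * hk'
  have hρ : ((a / b : ℝ) : ℂ) = a / b := by push_cast; rfl
  have hinv : (-1 / (a / b) : ℂ) = -(b / a) := by rw [neg_div, one_div_div]
  have key := sqrt_mul_mean_exp_eq ha hb (ρ := a / b) (by positivity)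
    (by simpa using periodic hb hab 1)
    (by simpa [hρ, hinv] using periodic ha (mul_comm a b ▸ hab) (-1))
  have ha' : ((√a : ℝ) : ℂ) ≠ 0 := by simpa using ha
  have hb' : ((√b : ℝ) : ℂ) ≠ 0 := by simpa using hb
  have hsqrt (c : ℕ) : (c : ℂ) = (√c : ℝ) ^ 2 := by
    rw [← ofReal_pow, Real.sq_sqrt c.cast_nonneg, ofReal_natCast]
  rw [neg_I_mul_cpow_half (by positivity), Real.sqrt_div a.cast_nonneg, ofReal_div, hρ, hinv] at key
  simp only [neg_mul, mul_neg] at key ⊢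
  generalize ∑ n ∈ range b, cexp (π * I * n ^ 2 * (a / b)) = S at key ⊢
  generalize ∑ n ∈ range a, cexp (-(π * I * n ^ 2 * (b / a))) = T at key ⊢
  have hexp := Complex.exp_ne_zero (π / 4 * I)
  generalize cexp (π / 4 * I) = e at key hexp ⊢
  rw [hsqrt a, hsqrt b] at key
  field_simp at key ⊢
  linear_combination key

lemma one_sub_mul_tsum_mul_pow {R : Type*} [Ring R] [TopologicalSpace R]
    [IsTopologicalRing R] [T2Space R]
    {c : ℕ → R} (hc : c 0 = 0) {z : R} (hs : Summable fun n ↦ c n * z ^ n) :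
    (∑' n, c n * z ^ n) * (1 - z) = ∑' n, (c (n + 1) - c n) * z ^ (n + 1) := by
  have hs' : Summable fun n ↦ c (n + 1) * z ^ (n + 1) := (summable_nat_add_iff 1).mpr hs
  calc (∑' n, c n * z ^ n) * (1 - z)
      = ∑' n, c (n + 1) * z ^ (n + 1) - ∑' n, c n * z ^ (n + 1) := by
        rw [mul_one_sub, ← hs.tsum_mul_right]
        simp [hs.tsum_eq_zero_add, hc, pow_succ, mul_assoc]
    _ = _ := by
        rw [← hs'.tsum_sub (by simpa [pow_succ, mul_assoc] using hs.mul_right z)]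
        simp [sub_mul]

lemma abs_rpow_neg_succ_sub_rpow_neg_le {n : ℕ} {x : ℝ} (hx : x ∈ Set.Icc (1 : ℝ) 2) :
    |((n + 1 : ℕ) : ℝ) ^ (-x) - (n : ℝ) ^ (-x)| ≤ 4 / ((n : ℝ) + 1) ^ 2 := by
  obtain ⟨hx1, hx2⟩ := hx
  rcases n.eq_zero_or_pos with rfl | hn
  · simp [Real.zero_rpow (by linarith : -x ≠ 0)]
  have hn' : (1 : ℝ) ≤ n := by exact_mod_cast hn
  have hratio : (n / (n + 1) : ℝ) ^ 2 ≤ ((n + 1 : ℝ) ^ (-x)) / (n : ℝ) ^ (-x) := by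
    rw [← Real.div_rpow (by positivity) (by positivity), Real.rpow_neg (by positivity),
      ← Real.inv_rpow (by positivity), inv_div, ← Real.rpow_two]
    exact Real.rpow_le_rpow_of_exponent_ge (by positivity) (by rw [div_le_one₀] <;> linarith) hx2
  have hinv : (n : ℝ) ^ (-x) ≤ (n : ℝ)⁻¹ := by
    rw [← Real.rpow_neg_one]
    exact Real.rpow_le_rpow_of_exponent_le hn' (by linarith)
  have hmono : (n + 1 : ℝ) ^ (-x) ≤ (n : ℝ) ^ (-x) :=
    Real.rpow_le_rpow_of_nonpos (by linarith) (by linarith) (by linarith)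
  have hpos : 0 < (n : ℝ) ^ (-x) := by positivity
  push_cast
  rw [abs_sub_comm, abs_of_nonneg (sub_nonneg.mpr hmono)]
  calc (n : ℝ) ^ (-x) - (n + 1 : ℝ) ^ (-x)
      = (n : ℝ) ^ (-x) * (1 - (n + 1 : ℝ) ^ (-x) / (n : ℝ) ^ (-x)) := by field_simp
    _ ≤ (n : ℝ)⁻¹ * (1 - (n / (n + 1)) ^ 2) := by
        gcongr
        exact sub_nonneg.mpr (div_le_one_of_le₀ hmono hpos.le)
    _ ≤ 4 / ((n : ℝ) + 1) ^ 2 := by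
        field_simp
        linarith

/-- The function `(1 - z) * Li_x(z)` attached to the polylogarithm `Li_x(z) = ∑ z ^ n / n ^ x`,
given by its power series in `z`: for `x ≥ 1` this series converges absolutely on the whole closed
unit disc, unlike that of `Li_x`. On the boundary it can thus be evaluated at `x = 1` both radially,
in terms of the logarithm, and as `x` decreases to `1`, in terms of `expZeta`. -/
noncomputable def oneSubMulPolylog (x : ℝ) (z : ℂ) : ℂ :=
  ∑' n : ℕ, (((((n + 1 : ℕ) : ℝ) ^ (-x) : ℝ) : ℂ) - ((n : ℝ) ^ (-x) : ℝ)) * z ^ (n + 1)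

lemma oneSubMulPolylog_eq {x : ℝ} (hx : 1 ≤ x) {z S : ℂ}
    (hS : HasSum (fun n : ℕ ↦ (((n : ℝ) ^ (-x) : ℝ) : ℂ) * z ^ n) S) :
    oneSubMulPolylog x z = S * (1 - z) := by
  rw [oneSubMulPolylog, ← hS.tsum_eq, ← one_sub_mul_tsum_mul_pow _ hS.summable]
  simp [Real.zero_rpow (by linarith : -x ≠ 0)]

lemma continuousOn_oneSubMulPolylog :
    ContinuousOn (Function.uncurry oneSubMulPolylog)
      (Set.Icc 1 2 ×ˢ Metric.closedBall 0 1) := by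
  have hpow (n : ℕ) : ContinuousOn (fun x : ℝ ↦ (n : ℝ) ^ (-x)) (Set.Icc 1 2) := by
    rcases eq_or_ne n 0 with rfl | hn
    · refine (continuousOn_const (c := (0 : ℝ))).congr fun x hx ↦ ?_
      exact_mod_cast Real.zero_rpow (by linarith [hx.1] : -x ≠ 0)
    · exact (Real.continuous_const_rpow (Nat.cast_ne_zero.mpr hn)).comp continuous_neg
        |>.continuousOn
  have hpow' (n : ℕ) : ContinuousOn (fun q : ℝ × ℂ ↦ (((n : ℝ) ^ (-q.1) : ℝ) : ℂ))
      (Set.Icc 1 2 ×ˢ Metric.closedBall 0 1) :=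
    continuous_ofReal.comp_continuousOn ((hpow n).comp continuousOn_fst fun q hq ↦ hq.1)
  have hsum : Summable fun n : ℕ ↦ 4 / ((n : ℝ) + 1) ^ 2 := by
    simpa [div_eq_mul_inv] using
      ((summable_nat_add_iff 1).mpr (Real.summable_one_div_nat_pow.mpr one_lt_two)).mul_left 4
  refine continuousOn_tsum (fun n ↦ ((hpow' _).sub (hpow' n)).mul
    (continuous_snd.pow _).continuousOn) hsum ?_
  rintro n ⟨x, z⟩ ⟨hx, hz⟩
  have hz' : ‖z‖ ^ (n + 1) ≤ 1 := pow_le_one₀ (norm_nonneg _) (by simpa using hz)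
  rw [norm_mul, ← ofReal_sub, norm_real, Real.norm_eq_abs, norm_pow]
  exact (mul_le_of_le_one_right (abs_nonneg _) hz').trans (abs_rpow_neg_succ_sub_rpow_neg_le hx)

lemma oneSubMulPolylog_one {z : ℂ} (hz : ‖z‖ = 1) (hz1 : z ≠ 1) :
    oneSubMulPolylog 1 z = -log (1 - z) * (1 - z) := by
  have hslit : 1 - z ∈ slitPlane := by
    have hre : z.re ≠ 1 := fun h ↦ hz1 <| by
      have him : z.im ^ 2 = 0 := by
        have := normSq_eq_norm_sq z; rw [hz, normSq_apply, h] at this; linarith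
      exact Complex.ext h (by simpa using him)
    exact Or.inl (by simpa using lt_of_le_of_ne (hz ▸ re_le_norm z) hre)
  have hray : Tendsto (fun r : ℝ ↦ r * z) (𝓝[<] 1) (𝓝 z) := by
    simpa using ((continuous_ofReal.tendsto 1).mono_left nhdsWithin_le_nhds).mul_const z
  have hball : ∀ᶠ r : ℝ in 𝓝[<] 1, ‖r * z‖ < 1 := by
    filter_upwards [Ioo_mem_nhdsLT zero_lt_one] with r hr
    simpa [hz, abs_of_pos hr.1] using hr.2
  have hpath : Tendsto (fun r : ℝ ↦ ((1 : ℝ), (r * z : ℂ))) (𝓝[<] 1)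
      (𝓝[Set.Icc 1 2 ×ˢ Metric.closedBall 0 1] (1, z)) := by
    refine tendsto_nhdsWithin_iff.mpr ⟨tendsto_const_nhds.prodMk_nhds hray, ?_⟩
    filter_upwards [hball] with r hr
    simpa using hr.le
  have hpolylog := (continuousOn_oneSubMulPolylog (1, z) (by simp [hz])).tendsto.comp hpath
  have hlog : Tendsto (fun r : ℝ ↦ -log (1 - r * z) * (1 - r * z)) (𝓝[<] 1)
      (𝓝 (-log (1 - z) * (1 - z))) :=
    have h := hray.const_sub 1
    (h.clog hslit).neg.mul h
  refine tendsto_nhds_unique hpolylog (hlog.congr' ?_)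
  filter_upwards [hball] with r hr
  refine (oneSubMulPolylog_eq le_rfl ?_).symm
  simpa [Real.rpow_neg_one, div_eq_inv_mul] using hasSum_taylorSeries_neg_log hr

lemma norm_exp_two_pi_I_mul_ofReal (a : ℝ) : ‖cexp (2 * π * I * a)‖ = 1 := by
  simp [norm_exp]

lemma oneSubMulPolylog_one_exp {a : ℝ} (ha : (a : UnitAddCircle) ≠ 0) :
    oneSubMulPolylog 1 (cexp (2 * π * I * a)) = expZeta a 1 * (1 - cexp (2 * π * I * a)) := by
  set w := cexp (2 * π * I * a) with hw
  have hnorm : ‖w‖ = 1 := norm_exp_two_pi_I_mul_ofReal a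
  have hpath : Tendsto (fun x : ℝ ↦ (x, w)) (𝓝[>] 1)
      (𝓝[Set.Icc 1 2 ×ˢ Metric.closedBall 0 1] (1, w)) := by
    refine tendsto_nhdsWithin_iff.mpr
      ⟨(tendsto_id.mono_left nhdsWithin_le_nhds).prodMk_nhds tendsto_const_nhds, ?_⟩
    filter_upwards [Ioo_mem_nhdsGT one_lt_two] with x hx
    simp [hnorm, hx.1.le, hx.2.le]
  have hpolylog := (continuousOn_oneSubMulPolylog (1, w) (by simp [hnorm])).tendsto.comp hpath
  have hzeta : Tendsto (fun x : ℝ ↦ expZeta a x * (1 - w)) (𝓝[>] 1)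
      (𝓝 (expZeta a 1 * (1 - w))) := by
    have hcont := (differentiable_expZeta_of_ne_zero ha).continuous.comp continuous_ofReal
    simpa using ((hcont.tendsto 1).mono_left nhdsWithin_le_nhds).mul_const (1 - w)
  refine tendsto_nhds_unique hpolylog (hzeta.congr' ?_)
  filter_upwards [self_mem_nhdsWithin] with x hx
  refine (oneSubMulPolylog_eq (le_of_lt hx) ?_).symm
  convert hasSum_expZeta_of_one_lt_re a (by simpa using hx : 1 < (x : ℂ).re) using 2 with n
  rw [ofReal_cpow n.cast_nonneg, ofReal_natCast, ofReal_neg, cpow_neg, hw, ← Complex.exp_nat_mul,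
    div_eq_inv_mul]
  ring_nf

lemma expZeta_one {a : ℝ} (ha : (a : UnitAddCircle) ≠ 0) :
    expZeta a 1 = -log (1 - cexp (2 * π * I * a)) := by
  have hne : cexp (2 * π * I * a) ≠ 1 := fun h ↦ ha <| by
    obtain ⟨n, hn⟩ := Complex.exp_eq_one_iff.mp h
    have : (a : ℂ) = n := mul_left_cancel₀ two_pi_I_ne_zero (by rw [hn]; ring)
    exact AddCircle.coe_eq_zero_iff _ |>.mpr ⟨n, by simpa using (by exact_mod_cast this.symm)⟩
  refine mul_right_cancel₀ (sub_ne_zero.mpr hne.symm) ?_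
  rw [← oneSubMulPolylog_one_exp ha, oneSubMulPolylog_one (norm_exp_two_pi_I_mul_ofReal a) hne]

lemma one_sub_exp_two_pi_I_mul (a : ℝ) :
    1 - cexp (2 * π * I * a) = (2 * Real.sin (π * a) : ℝ) * cexp ((π * a - π / 2 : ℝ) * I) := by
  have hexp : cexp ((π * a - π / 2 : ℝ) * I) = -I * cexp (π * a * I) := by
    rw [← exp_neg_pi_div_two_mul_I, ← Complex.exp_add]
    push_cast
    ring_nf
  have hsq : cexp (2 * π * I * a) = cexp (π * a * I) ^ 2 := by
    rw [← Complex.exp_nat_mul]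
    push_cast
    ring_nf
  rw [hexp, hsq, ofReal_mul, ofReal_sin, ofReal_mul, Complex.sin, neg_mul, Complex.exp_neg]
  have := Complex.exp_ne_zero (π * a * I)
  generalize cexp (π * a * I) = w at this ⊢
  push_cast
  field_simp
  linear_combination (1 - w ^ 2) * I_sq

lemma expZeta_one_of_mem_Ioo {a : ℝ} (ha : a ∈ Set.Ioo 0 1) :
    expZeta a 1 = -Real.log (2 * Real.sin (π * a)) + π * (1 / 2 - a) * I := by
  have hπa : π * a ∈ Set.Ioo 0 π :=
    ⟨mul_pos Real.pi_pos ha.1, mul_lt_of_lt_one_right Real.pi_pos ha.2⟩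
  have hsin : 0 < 2 * Real.sin (π * a) := mul_pos two_pos (Real.sin_pos_of_mem_Ioo hπa)
  have ha0 : (a : UnitAddCircle) ≠ 0 :=
    (AddCircle.coe_eq_zero_iff_of_mem_Ico ⟨ha.1.le, ha.2⟩).not.mpr ha.1.ne'
  rw [expZeta_one ha0, one_sub_exp_two_pi_I_mul, log_ofReal_mul hsin (Complex.exp_ne_zero _),
    Complex.log_exp]
  · push_cast
    ring
  all_goals rw [im_ofReal_mul, I_im]; linarith [hπa.1, hπa.2, Real.pi_pos]

lemma sinZeta_one {a : ℝ} (ha : a ∈ Set.Ioo 0 1) : sinZeta a 1 = π * (1 / 2 - a) := by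
  have hneg : -(a : UnitAddCircle) = ((1 - a : ℝ) : UnitAddCircle) := by
    rw [AddCircle.coe_sub, AddCircle.coe_period, zero_sub]
  rw [sinZeta_eq, hneg, expZeta_one_of_mem_Ioo ha,
    expZeta_one_of_mem_Ioo ⟨sub_pos.mpr ha.2, sub_lt_self 1 ha.1⟩, mul_one_sub, Real.sin_pi_sub]
  push_cast
  field_simp
  ring

lemma LFunction_dft_one_of_odd {N : ℕ} [NeZero N] {Φ : ZMod N → ℂ} (hΦ : Φ.Odd) :
    ZMod.LFunction (𝓕 Φ) 1 = -(π * I) * ∑ j, Φ j * (1 / 2 - j.val / N) := by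
  have hΦ0 : Φ 0 = 0 := hΦ.map_zero
  have hcos : ∑ j, Φ j * cosZeta (ZMod.toAddCircle j) 1 = 0 :=
    Function.Odd.sum_eq_zero fun j ↦ by rw [hΦ, map_neg, cosZeta_neg, neg_mul]
  have hsin (j : ZMod N) :
      Φ j * sinZeta (ZMod.toAddCircle j) 1 = Φ j * (π * (1 / 2 - j.val / N)) := by
    rcases eq_or_ne j 0 with rfl | hj
    · simp [hΦ0]
    have hN : (0 : ℝ) < N := Nat.cast_pos.mpr (NeZero.pos N)
    rw [ZMod.toAddCircle_apply, sinZeta_one]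
    · push_cast
      rfl
    · exact ⟨div_pos (by exact_mod_cast ZMod.val_pos.mpr hj) hN,
        (div_lt_one hN).mpr (by exact_mod_cast j.val_lt)⟩
  calc ZMod.LFunction (𝓕 Φ) 1
      = ∑ j, Φ j * cosZeta (ZMod.toAddCircle j) 1 -
          I * ∑ j, Φ j * sinZeta (ZMod.toAddCircle j) 1 := by
        rw [ZMod.LFunction_dft Φ (.inl hΦ0), mul_sum, ← sum_sub_distrib]
        refine sum_congr rfl fun j _ ↦ ?_
        rw [map_neg, expZeta, cosZeta_neg, sinZeta_neg]
        ring
    _ = -(π * I) * ∑ j, Φ j * (1 / 2 - j.val / N) := by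
        simp_rw [hcos, hsin, mul_sum, zero_sub, ← sum_neg_distrib]
        exact sum_congr rfl fun j _ ↦ by ring

lemma gaussSum_mul_LFunction_inv_one {N : ℕ} [NeZero N] {χ : DirichletCharacter ℂ N}
    (hχ : χ.IsPrimitive) (hodd : χ.Odd) :
    gaussSum χ ZMod.stdAddChar * χ⁻¹.LFunction 1 =
      π * I * ∑ j : ZMod N, χ j * (1 / 2 - j.val / N) := by
  have hinv (k : ZMod N) : χ⁻¹ (-k) = -χ⁻¹ k := by
    have : χ⁻¹ (-1) = -1 := by rw [MulChar.inv_apply_eq_inv', hodd]; norm_num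
    rw [← neg_one_mul, map_mul, this, neg_one_mul]
  have hdft : 𝓕 χ = fun k ↦ -gaussSum χ ZMod.stdAddChar * χ⁻¹ k := by
    ext k
    rw [hχ.fourierTransform_eq_inv_mul_gaussSum, hinv]
    ring
  have h := LFunction_dft_one_of_odd (Φ := χ) hodd.to_fun
  rw [hdft] at h
  simp only [ZMod.LFunction, DirichletCharacter.LFunction, mul_assoc, ← mul_sum] at h ⊢
  linear_combination -h

lemma LFunction_nonneg_of_one_lt {N : ℕ} [NeZero N] {χ : DirichletCharacter ℂ N}
    (hχ : χ.IsQuadratic) {x : ℝ} (hx : 1 < x) : 0 ≤ χ.LFunction x := by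
  have hfactor (q : Nat.Primes) : 0 ≤ (1 - χ q * (q : ℂ) ^ (-x : ℂ))⁻¹ := by
    have hpow : (q : ℂ) ^ (-x : ℂ) = ((q : ℝ) ^ (-x) : ℝ) := by
      rw [ofReal_cpow (Nat.cast_nonneg _), ofReal_neg, ofReal_natCast]
    have hpos : 0 ≤ (q : ℝ) ^ (-x) := by positivity
    have hle : (q : ℝ) ^ (-x) ≤ 1 :=
      Real.rpow_le_one_of_one_le_of_nonpos (by exact_mod_cast q.2.one_le) (by linarith)
    obtain ⟨c, hc, hχc⟩ : ∃ c : ℝ, c ≤ 1 ∧ χ q = c := by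
      rcases hχ q with h | h | h
      exacts [⟨0, zero_le_one, by simpa⟩, ⟨1, le_rfl, by simpa⟩, ⟨-1, by norm_num, by simpa⟩]
    rw [hpow, hχc]
    norm_cast
    exact inv_nonneg.mpr (sub_nonneg.mpr ((mul_le_of_le_one_left hpos hc).trans hle))
  have hx' : 1 < (x : ℂ).re := hx
  rw [DirichletCharacter.LFunction_eq_LSeries _ hx']
  exact ge_of_tendsto (DirichletCharacter.LSeries_eulerProduct_hasProd χ hx')
    (Eventually.of_forall fun s ↦ prod_nonneg fun q _ ↦ hfactor q)

lemma LFunction_one_pos {N : ℕ} [NeZero N] {χ : DirichletCharacter ℂ N} (hχ : χ.IsQuadratic)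
    (hχ1 : χ ≠ 1) : 0 < χ.LFunction 1 := by
  have hcont := (DirichletCharacter.differentiable_LFunction hχ1).continuous.comp continuous_ofReal
  have hlim : Tendsto (fun x : ℝ ↦ χ.LFunction x) (𝓝[>] 1) (𝓝 (χ.LFunction 1)) := by
    simpa only [Function.comp_def, ofReal_one] using
      (hcont.tendsto 1).mono_left nhdsWithin_le_nhds
  refine lt_of_le_of_ne (ge_of_tendsto hlim ?_)
    (DirichletCharacter.LFunction_apply_one_ne_zero hχ1).symm
  filter_upwards [self_mem_nhdsWithin] with x hx
  exact LFunction_nonneg_of_one_lt hχ hx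

lemma gaussSum_quadraticChar_eq_sum_sq {F R : Type*} [Field F] [Fintype F] [DecidableEq F]
    [CommRing R] [IsDomain R] (hF : ringChar F ≠ 2) {ψ : AddChar F R} (hψ : ψ ≠ 1) :
    gaussSum ((quadraticChar F).ringHomComp (Int.castRingHom R)) ψ = ∑ x, ψ (x ^ 2) := by
  have hcard (a : F) : (#{x : F | x ^ 2 = a} : R) = quadraticChar F a + 1 := by
    have h := quadraticChar_card_sqrts hF a
    rw [Set.toFinset_ofPred] at h
    exact_mod_cast congrArg (Int.cast (R := R)) h
  calc gaussSum ((quadraticChar F).ringHomComp (Int.castRingHom R)) ψ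
      = ∑ a, ((quadraticChar F a : R) + 1) * ψ a := by
        simp [gaussSum, add_mul, sum_add_distrib, AddChar.sum_eq_zero_of_ne_one hψ]
    _ = ∑ a, ∑ x with x ^ 2 = a, ψ (x ^ 2) := by
        refine sum_congr rfl fun a _ ↦ ?_
        rw [← hcard, sum_congr rfl fun x hx ↦ congrArg ψ (mem_filter.mp hx).2, sum_const,
          nsmul_eq_mul]
    _ = ∑ x, ψ (x ^ 2) := sum_fiberwise _ _ _

lemma sum_zmod_eq_sum_range {M : Type*} [AddCommMonoid M] {N : ℕ} [NeZero N] (f : ZMod N → M) :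
    ∑ x, f x = ∑ n ∈ range N, f n :=
  sum_nbij' ZMod.val (fun n ↦ n) (by simp [ZMod.val_lt]) (by simp) (by simp)
    (fun n hn ↦ ZMod.val_cast_of_lt (mem_range.mp hn)) (by simp)

lemma exp_pi_div_four_mul_I : cexp (π / 4 * I) = (1 + I) / √2 := by
  have h2 : ((√2 : ℝ) : ℂ) ^ 2 = 2 := by exact_mod_cast Real.sq_sqrt zero_le_two
  have : ((√2 : ℝ) : ℂ) ≠ 0 := by simp
  rw [show (π / 4 * I : ℂ) = ((π / 4 : ℝ) : ℂ) * I by push_cast; rfl, exp_mul_I, ← ofReal_cos,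
    ← ofReal_sin, Real.cos_pi_div_four, Real.sin_pi_div_four]
  push_cast
  field_simp
  linear_combination (1 + I) * h2

lemma sum_stdAddChar_sq_of_mod_four_eq_three {N : ℕ} [NeZero N] (hN : N % 4 = 3) :
    ∑ x : ZMod N, ZMod.stdAddChar (x ^ 2) = √N * I := by
  have hterm (n : ℕ) : ZMod.stdAddChar ((n : ZMod N) ^ 2) =
      cexp (π * I * n ^ 2 * ((2 : ℕ) / N)) := by
    have h := ZMod.stdAddChar_coe (N := N) (n ^ 2 : ℤ)
    push_cast at h ⊢
    rw [h]
    ring_nf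
  have hI : cexp (-π * I * (1 : ℕ) ^ 2 * (N / (2 : ℕ))) = I := by
    obtain ⟨k, hk⟩ : ∃ k : ℤ, (N : ℤ) = 4 * k + 3 := ⟨N / 4, by lia⟩
    have hk' : (N : ℂ) = 4 * k + 3 := by exact_mod_cast hk
    rw [hk', show (-π * I * (1 : ℕ) ^ 2 * ((4 * k + 3) / (2 : ℕ)) : ℂ) =
      π / 2 * I - (k + 1 : ℤ) * (2 * π * I) by push_cast; ring,
      Complex.exp_periodic.sub_int_mul_eq, exp_pi_div_two_mul_I]
  have h0 : cexp (-π * I * (0 : ℕ) ^ 2 * (N / (2 : ℕ))) = 1 := by simp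
  have hLS := landsberg_schaar two_ne_zero (NeZero.ne N) (even_two.mul_right N)
  rw [sum_range_succ, sum_range_one, h0, hI, exp_pi_div_four_mul_I] at hLS
  rw [sum_zmod_eq_sum_range, sum_congr rfl fun n _ ↦ hterm n]
  generalize ∑ n ∈ range N, cexp (π * I * n ^ 2 * ((2 : ℕ) / N)) = S at hLS ⊢
  have hN0 : ((√N : ℝ) : ℂ) ≠ 0 := by simpa using NeZero.ne N
  have h2 : ((√(2 : ℕ) : ℝ) : ℂ) ^ 2 = 2 := by exact_mod_cast Real.sq_sqrt zero_le_two
  have h2' : ((√(2 : ℕ) : ℝ) : ℂ) ≠ 0 := by simp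
  rw [Nat.cast_ofNat] at hLS h2 h2'
  field_simp at hLS
  rw [h2] at hLS
  linear_combination hLS / 2 + √N / 2 * I_sq

lemma isPrimitive_of_prime {R : Type*} [CommMonoidWithZero R] {p : ℕ} [Fact p.Prime]
    {χ : DirichletCharacter R p} (hχ : χ ≠ 1) : χ.IsPrimitive :=
  ((Nat.dvd_prime Fact.out).mp χ.conductor_dvd_level).resolve_left
    (χ.eq_one_iff_conductor_eq_one.not.mp hχ)

lemma sum_range_eq_two_nsmul_sum_Icc {M : Type*} [AddCommMonoid M] {f : ℕ → M} {m : ℕ}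
    (hf0 : f 0 = 0) (hf : ∀ n ∈ Icc 1 m, f (2 * m + 1 - n) = f n) :
    ∑ n ∈ range (2 * m + 1), f n = 2 • ∑ n ∈ Icc 1 m, f n := by
  have hupper : ∑ n ∈ range (2 * m + 1) with m < n, f n = ∑ n ∈ Icc 1 m, f n :=
    sum_nbij' (2 * m + 1 - ·) (2 * m + 1 - ·) (by grind) (by grind) (by grind) (by grind) (by grind)
  have hlower : ∑ n ∈ range (2 * m + 1) with ¬ m < n, f n = ∑ n ∈ Icc 1 m, f n :=
    (sum_subset (by grind) (by grind)).symm
  rw [two_nsmul, ← sum_filter_add_sum_filter_not _ (m < ·), hupper, hlower]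

lemma sum_range_eq_two_nsmul_sum_Icc_two_mul {M : Type*} [AddCommMonoid M] {f : ℕ → M} {m : ℕ}
    (hf0 : f 0 = 0) (hf : ∀ n ∈ Icc 1 m, f (2 * m + 1 - 2 * n) = f (2 * n)) :
    ∑ n ∈ range (2 * m + 1), f n = 2 • ∑ n ∈ Icc 1 m, f (2 * n) := by
  have hodd : ∑ n ∈ range (2 * m + 1) with n % 2 = 1, f n = ∑ n ∈ Icc 1 m, f (2 * n) :=
    sum_nbij' (fun n ↦ (2 * m + 1 - n) / 2) (2 * m + 1 - 2 * ·) (by grind) (by grind) (by grind)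
      (by grind) (by grind)
  have heven : ∑ n ∈ range (2 * m + 1) with ¬ n % 2 = 1, f n = ∑ n ∈ Icc 1 m, f (2 * n) := by
    have hmem (n : ℕ) (hn : n ∈ {n ∈ range (2 * m + 1) | ¬ n % 2 = 1}) (hn0 : n ≠ 0) :
        n ∈ (Icc 1 m).image (2 * ·) := mem_image.mpr ⟨n / 2, by grind, by grind⟩
    rw [← sum_image (s := Icc 1 m) (g := (2 * ·)) (by grind [Set.InjOn])]
    exact (sum_subset (by grind) (by grind)).symm
  rw [two_nsmul, ← sum_filter_add_sum_filter_not _ (· % 2 = 1), hodd, heven]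

lemma four_mul_apply_two_mul_sum_Icc {R : Type*} [CommRing R] {N m : ℕ} [NeZero N]
    (hN : N = 2 * m + 1) {χ : DirichletCharacter R N} (hχ : χ.Odd) :
    4 * χ 2 * ∑ k ∈ Icc 1 m, χ k * k = (χ 2 - 1) * ∑ j : ZMod N, χ j * (N - 2 * j.val) := by
  rcases eq_or_ne m 0 with rfl | hm
  · obtain rfl : N = 1 := by simpa using hN
    have h2 : (2 : ZMod 1) = 1 := Subsingleton.elim _ _
    simp [h2]
  have : Fact (1 < N) := ⟨by lia⟩
  let f : ℕ → R := fun n ↦ χ n * (N - 2 * n)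
  have hf0 : f 0 = 0 := by simp [f, MulChar.map_zero]
  have hsymm (n : ℕ) (hn : n ≤ N) : f (N - n) = f n := by
    simp only [f, Nat.cast_sub hn, CharP.cast_eq_zero (ZMod N), zero_sub, hχ.eval_neg]
    ring
  have hsum : ∑ j : ZMod N, χ j * (N - 2 * j.val) = ∑ n ∈ range (2 * m + 1), f n := by
    rw [sum_zmod_eq_sum_range]
    refine sum_congr (by rw [hN]) fun n hn ↦ ?_
    rw [ZMod.val_cast_of_lt ((mem_range.mp hn).trans_eq hN.symm)]
  have hhalf : ∑ j : ZMod N, χ j * (N - 2 * j.val) =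
      2 * (N * ∑ k ∈ Icc 1 m, χ k - 2 * ∑ k ∈ Icc 1 m, χ k * k) := by
    rw [hsum, sum_range_eq_two_nsmul_sum_Icc hf0 fun n hn ↦ hN ▸ hsymm n (by grind), nsmul_eq_mul]
    simp only [mul_sum, ← sum_sub_distrib]
    exact sum_congr rfl fun k _ ↦ by simp only [f]; push_cast; ring
  have hdouble : ∑ j : ZMod N, χ j * (N - 2 * j.val) =
      2 * χ 2 * (N * ∑ k ∈ Icc 1 m, χ k - 4 * ∑ k ∈ Icc 1 m, χ k * k) := by
    rw [hsum, sum_range_eq_two_nsmul_sum_Icc_two_mul hf0 fun n hn ↦ hN ▸ hsymm _ (by grind),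
      nsmul_eq_mul]
    simp only [mul_sum, ← sum_sub_distrib]
    exact sum_congr rfl fun k _ ↦ by simp only [f, Nat.cast_mul, Nat.cast_ofNat, map_mul]; ring
  linear_combination hdouble - χ 2 * hhalf

/-- The quadratic character of `ZMod p`, with values in `ℂ` so that it has a Gauss sum and an
L-function. -/
noncomputable def quadraticDirichletCharacter (p : ℕ) [Fact p.Prime] : DirichletCharacter ℂ p :=
  (quadraticChar (ZMod p)).ringHomComp (Int.castRingHom ℂ)

section QuadraticCharacter

variable {p : ℕ} [Fact p.Prime]

lemma quadraticDirichletCharacter_apply (a : ZMod p) :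
    quadraticDirichletCharacter p a = quadraticChar (ZMod p) a := rfl

lemma isQuadratic_quadraticDirichletCharacter : (quadraticDirichletCharacter p).IsQuadratic :=
  (quadraticChar_isQuadratic _).comp _

lemma quadraticDirichletCharacter_ne_one (hp : p ≠ 2) : quadraticDirichletCharacter p ≠ 1 :=
  (MulChar.ringHomComp_ne_one_iff (RingHom.injective_int _)).mpr
    (quadraticChar_ne_one (by rwa [ZMod.ringChar_zmod_n]))

lemma odd_quadraticChar (hp : p % 4 = 3) : DirichletCharacter.Odd (quadraticChar (ZMod p)) := by
  rw [DirichletCharacter.Odd, quadraticChar_neg_one_iff_not_isSquare,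
    ZMod.exists_sq_eq_neg_one_iff, not_not, hp]

lemma odd_quadraticDirichletCharacter (hp : p % 4 = 3) : (quadraticDirichletCharacter p).Odd := by
  rw [DirichletCharacter.Odd, quadraticDirichletCharacter_apply, odd_quadraticChar hp]
  norm_num

lemma gaussSum_quadraticDirichletCharacter (hp : p % 4 = 3) :
    gaussSum (quadraticDirichletCharacter p) ZMod.stdAddChar = √p * I := by
  have hψ : (ZMod.stdAddChar : AddChar (ZMod p) ℂ) ≠ 1 := by
    simpa using ZMod.isPrimitive_stdAddChar p one_ne_zero
  have hF : ringChar (ZMod p) ≠ 2 := by rw [ZMod.ringChar_zmod_n]; lia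
  rw [quadraticDirichletCharacter, gaussSum_quadraticChar_eq_sum_sq hF hψ,
    sum_stdAddChar_sq_of_mod_four_eq_three hp]

lemma sum_quadraticChar_mul_pos (hp : p % 4 = 3) :
    0 < ∑ j : ZMod p, quadraticChar (ZMod p) j * ((p : ℤ) - 2 * j.val) := by
  have hne : quadraticDirichletCharacter p ≠ 1 := quadraticDirichletCharacter_ne_one (by lia)
  have hquad := isQuadratic_quadraticDirichletCharacter (p := p)
  have hL := LFunction_one_pos hquad hne
  have hsum := gaussSum_mul_LFunction_inv_one (isPrimitive_of_prime hne)
    (odd_quadraticDirichletCharacter hp)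
  rw [gaussSum_quadraticDirichletCharacter hp, hquad.inv] at hsum
  have hp0 : 0 < (p : ℝ) := by exact_mod_cast NeZero.pos p
  have hcast : ((∑ j : ZMod p, quadraticChar (ZMod p) j * ((p : ℤ) - 2 * j.val) : ℤ) : ℂ) =
      2 * p * ∑ j : ZMod p, quadraticDirichletCharacter p j * (1 / 2 - j.val / p) := by
    have : (p : ℂ) ≠ 0 := by exact_mod_cast hp0.ne'
    push_cast [mul_sum, quadraticDirichletCharacter_apply]
    exact sum_congr rfl fun j _ ↦ by field_simp
  generalize ∑ j : ZMod p, quadraticChar (ZMod p) j * ((p : ℤ) - 2 * j.val) = T at hcast ⊢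
  have key : (2 * p * √p : ℝ) * (quadraticDirichletCharacter p).LFunction 1 = (π * T : ℝ) := by
    apply mul_right_cancel₀ I_ne_zero
    push_cast
    linear_combination 2 * p * hsum - π * I * hcast
  have hpos : (0 : ℂ) < (2 * p * √p : ℝ) * (quadraticDirichletCharacter p).LFunction 1 :=
    mul_pos (zero_lt_real.mpr (by positivity)) hL
  rw [key, zero_lt_real, mul_pos_iff_of_pos_left Real.pi_pos] at hpos
  exact_mod_cast hpos

lemma sum_Icc_quadraticChar_mul_pos {m : ℕ} (hpm : p = 2 * m + 1) (hp : p % 8 = 3) :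
    0 < ∑ k ∈ Icc 1 m, quadraticChar (ZMod p) k * k := by
  have hT := sum_quadraticChar_mul_pos (p := p) (by lia)
  have h2 : quadraticChar (ZMod p) 2 = -1 := by
    rw [quadraticChar_neg_one_iff_not_isSquare, ZMod.exists_sq_eq_two_iff (by lia)]
    lia
  have h := four_mul_apply_two_mul_sum_Icc hpm (odd_quadraticChar (p := p) (by lia))
  rw [h2] at h
  linarith

lemma exists_sq_modEq_iff_isSquare {n : ℕ} {y : ℤ} :
    (∃ x : ℤ, x ^ 2 ≡ y [ZMOD n]) ↔ IsSquare (y : ZMod n) := by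
  simp only [← ZMod.intCast_eq_intCast_iff, Int.cast_pow, isSquare_iff_exists_sq, eq_comm,
    (ZMod.intCast_surjective).exists]

open scoped Classical in
lemma sum_filter_isSquare_sub_sum_filter_not_isSquare {m : ℕ} (hm : m < p) :
    ∑ k ∈ Icc 1 m with IsSquare ((k : ℕ) : ZMod p), (k : ℤ) -
        ∑ k ∈ Icc 1 m with ¬ IsSquare ((k : ℕ) : ZMod p), (k : ℤ) =
      ∑ k ∈ Icc 1 m, quadraticChar (ZMod p) k * k := by
  rw [sum_filter, sum_filter, ← sum_sub_distrib]
  refine sum_congr rfl fun k hk ↦ ?_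
  obtain ⟨hk1, hkm⟩ := mem_Icc.mp hk
  have hk0 : (k : ZMod p) ≠ 0 :=
    (ZMod.natCast_eq_zero_iff k p).not.mpr (Nat.not_dvd_of_pos_of_lt hk1 (hkm.trans_lt hm))
  by_cases hsq : IsSquare (k : ZMod p)
  · simp [hsq, (quadraticChar_one_iff_isSquare hk0).mpr hsq]
  · simp [hsq, quadraticChar_neg_one_iff_not_isSquare.mpr hsq]

end QuadraticCharacter

open scoped Classical in
/-- For a prime `p ≡ 3 (mod 8)`, the sum of the quadratic residues of `p` in
`[1, (p-1)/2]` is strictly greater than the sum of the non-residues of `p` in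
`[1, (p-1)/2]`. -/
theorem sum_small_residues_gt_sum_small_nonresidues_of_prime_mod_eight_eq_three
    (p : ℕ) (hp : p.Prime) (hmod : p % 8 = 3) :
    ∑ y ∈ (Finset.Icc 1 ((p - 1) / 2)).filter
        (fun y => ¬ ∃ x : ℤ, x ^ 2 ≡ (y : ℤ) [ZMOD (p : ℤ)]), y <
      ∑ y ∈ (Finset.Icc 1 ((p - 1) / 2)).filter
        (fun y => ∃ x : ℤ, x ^ 2 ≡ (y : ℤ) [ZMOD (p : ℤ)]), y := by
  have : Fact p.Prime := ⟨hp⟩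
  have hpos := sum_Icc_quadraticChar_mul_pos (m := (p - 1) / 2) (by lia) hmod
  rw [← sum_filter_isSquare_sub_sum_filter_not_isSquare (by lia), sub_pos] at hpos
  -- The type ascriptions on `y` make the sums range over `Finset ℤ`, coerced from `Finset ℕ`
  -- through the monad structure of `Finset`.
  simp only [bind_pure_comp, fmap_def, filter_image, sum_image Nat.cast_injective.injOn,
    exists_sq_modEq_iff_isSquare, Int.cast_natCast]
  exact hpos
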